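/- Suppose there exist a diagonal positive definite P ∈ ℝ^{n×n}, a diagonal positive definite T ∈ ℝ^{m×m}, scalars μ, χ, α > 0, and a symmetric positive definite Γ ∈ ℝ^{n×n} satisfying conditions (C1), (C2), (C3). Let T₀ > 0, let X : [0,T₀] × [0,1] → ℝⁿ be continuously differentiable and d : [0,T₀] × [0,1] → ℝ^q continuous, such that ∂ₜX(t,z) + Λ ∂_zX(t,z) = N d(t,z) for all (t,z) ∈ [0,T₀] × [0,1] and X(t,0) = H_cl X(t,1) + Bφ(K X(t,1)) for all t ∈ [0,T₀]. Then for all t ∈ [0,T₀], (∫₀¹ |X(t,z)|² dz)^{1/2} ≤ √(λ_max(P)/λ_min(P))·e^{μ/2}·e^{−(α/2)t}·(∫₀¹ |X(0,z)|² dz)^{1/2} + (χ e^{μ/2}/√(λ_min(P)))·(∫₀ᵗ ∫₀¹ |d(θ,z)|² dz dθ)^{1/2}. -/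

import Mathlib

open Matrix Set

/-- Componentwise saturation function with saturation levels `ubar`. -/
noncomputable def saturate {m : ℕ} (ubar : Fin m → ℝ) (u : Fin m → ℝ) : Fin m → ℝ :=
  fun i => min |u i| (ubar i) * Real.sign (u i)

/-- Dead-zone nonlinearity `φ(u) = σ(u) - u`. -/
noncomputable def deadzone {m : ℕ} (ubar : Fin m → ℝ) (u : Fin m → ℝ) : Fin m → ℝ :=
  saturate ubar u - u

/-- The Euclidean norm on `ℝ^q`. -/
noncomputable def enorm' {q : ℕ} (x : Fin q → ℝ) : ℝ := Real.sqrt (∑ i, (x i) ^ 2)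

/-!
The Lyapunov functional is `V(x) = ∫₀¹ e^{-μz} xᵀ P x dz`. Along a solution, integrating the
transport term by parts in `z` leaves the boundary flux
`x(0)ᵀ PΛ x(0) - e^{-μ} x(1)ᵀ PΛ x(1)`, which (C1) makes nonpositive once the sector inequality
`φ(u)ᵀ T (φ(u) + u) ≤ 0` is added with weight two (the S-procedure). In the interior, (C2) and (C3)
add up to the supply-rate inequality `α xᵀPx - μ xᵀPΛx + 2 xᵀPN d ≤ χ² |d|²`. Hence `e^{αt} V` grows
at rate at most `χ² e^{αt} ∫₀¹ |d|² dz`. Integrating the pointwise time derivative over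
`[0, t] × [0, 1]` and exchanging the integrals gives the integrated form without ever
differentiating `V`, and comparing `V` with the squared `L²` norm, with constants
`λ_min(P) e^{-μ}` and `λ_max(P)`, gives the bound.
-/

section LinearAlgebra

variable {R ι κ ν : Type*}

theorem posDef_of_isDiag {A : Matrix ι ι ℝ} (hA : A.IsDiag) (hpos : ∀ i, 0 < A i i) :
    A.PosDef := by
  classical
  rw [← hA.diagonal_diag]
  exact .diagonal hpos

variable [Fintype ι] [Fintype κ] [Fintype ν]

theorem isDiag_mul [NonUnitalNonAssocSemiring R] {A C : Matrix ι ι R}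
    (hA : A.IsDiag) (hC : C.IsDiag) : (A * C).IsDiag := by
  classical
  rw [← hA.diagonal_diag, ← hC.diagonal_diag, diagonal_mul_diagonal]
  exact isDiag_diagonal _

theorem spectrum_eq_range_diag [Field R] [DecidableEq ι] {A : Matrix ι ι R} (hA : A.IsDiag) :
    spectrum R A = range A.diag := by
  conv_lhs => rw [← hA.diagonal_diag, spectrum_diagonal]

theorem dotProduct_transpose_mulVec_eq_mulVec_dotProduct [CommSemiring R] (A : Matrix ι κ R)
    (x : κ → R) (y : ι → R) : x ⬝ᵥ Aᵀ *ᵥ y = A *ᵥ x ⬝ᵥ y := by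
  rw [dotProduct_transpose_mulVec, dotProduct_comm]

theorem dotProduct_mulVec_comm_of_isSymm [CommSemiring R] {A : Matrix ι ι R} (hA : A.IsSymm)
    (x y : ι → R) : x ⬝ᵥ A *ᵥ y = y ⬝ᵥ A *ᵥ x := by
  rw [← dotProduct_transpose_mulVec, hA.eq]

theorem dotProduct_self_nonneg (x : ι → ℝ) : 0 ≤ x ⬝ᵥ x :=
  Finset.sum_nonneg fun i _ => mul_self_nonneg (x i)

open scoped MatrixOrder in
theorem sInf_spectrum_mul_le_dotProduct_mulVec [DecidableEq ι] {A : Matrix ι ι ℝ}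
    (hA : A.IsHermitian) (x : ι → ℝ) :
    sInf (spectrum ℝ A) * (x ⬝ᵥ x) ≤ x ⬝ᵥ A *ᵥ x := by
  have hle : algebraMap ℝ (Matrix ι ι ℝ) (sInf (spectrum ℝ A)) ≤ A :=
    (algebraMap_le_iff_le_spectrum (ha := hA)).2 fun _ =>
      csInf_le finite_real_spectrum.bddBelow
  have h := (le_iff.1 hle).dotProduct_mulVec_nonneg x
  simpa [Algebra.algebraMap_eq_smul_one, sub_mulVec, smul_mulVec] using h

open scoped MatrixOrder in
theorem dotProduct_mulVec_le_sSup_spectrum_mul [DecidableEq ι] {A : Matrix ι ι ℝ}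
    (hA : A.IsHermitian) (x : ι → ℝ) :
    x ⬝ᵥ A *ᵥ x ≤ sSup (spectrum ℝ A) * (x ⬝ᵥ x) := by
  have hle : A ≤ algebraMap ℝ (Matrix ι ι ℝ) (sSup (spectrum ℝ A)) :=
    (le_algebraMap_iff_spectrum_le (ha := hA)).2 fun _ =>
      le_csSup finite_real_spectrum.bddAbove
  have h := (le_iff.1 hle).dotProduct_mulVec_nonneg x
  simpa [Algebra.algebraMap_eq_smul_one, sub_mulVec, smul_mulVec] using h

theorem sInf_spectrum_pos [DecidableEq ι] [Nonempty ι] {A : Matrix ι ι ℝ} (hA : A.PosDef) :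
    0 < sInf (spectrum ℝ A) := by
  have hne : (spectrum ℝ A).Nonempty :=
    hA.isHermitian.spectrum_real_eq_range_eigenvalues ▸ range_nonempty _
  have hmem := hne.csInf_mem finite_real_spectrum
  rw [hA.isHermitian.spectrum_real_eq_range_eigenvalues] at hmem
  obtain ⟨i, hi⟩ := hmem
  rw [hA.isHermitian.spectrum_real_eq_range_eigenvalues, ← hi]
  exact hA.eigenvalues_pos i

theorem dotProduct_mulVec_le_of_boundary_lmi {Q : Matrix ι ι ℝ} {A : Matrix ι ι ℝ}
    {B : Matrix ι κ ℝ} {K : Matrix κ ι ℝ} {T : Matrix κ κ ℝ} {r : ℝ} (hT : T.IsSymm)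
    (hLMI : (-(fromBlocks (Aᵀ * Q * A - r • Q) (Aᵀ * Q * B - Kᵀ * T)
      (Bᵀ * Q * A - T * K) (Bᵀ * Q * B - 2 • T))).PosSemidef)
    {x : ι → ℝ} {w : κ → ℝ} (hsector : w ⬝ᵥ T *ᵥ (w + K *ᵥ x) ≤ 0) :
    (A *ᵥ x + B *ᵥ w) ⬝ᵥ Q *ᵥ (A *ᵥ x + B *ᵥ w) ≤ r * (x ⬝ᵥ Q *ᵥ x) := by
  have h := hLMI.dotProduct_mulVec_nonneg (Sum.elim x w)
  have hcomm := dotProduct_mulVec_comm_of_isSymm hT (K *ᵥ x) w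
  simp only [star_trivial, neg_mulVec, fromBlocks_mulVec, Sum.elim_comp_inl, Sum.elim_comp_inr,
    dotProduct_neg, sumElim_dotProduct_sumElim, sub_mulVec, smul_mulVec, ← mulVec_mulVec,
    Matrix.mul_assoc, two_nsmul, add_mulVec, dotProduct_add, dotProduct_sub, dotProduct_smul,
    smul_eq_mul, dotProduct_transpose_mulVec_eq_mulVec_dotProduct] at h
  simp only [mulVec_add, dotProduct_add, add_dotProduct] at hsector ⊢
  linarith

theorem supply_rate_le_of_domain_lmi [DecidableEq ι] [DecidableEq ν] {P Λ Γ : Matrix ι ι ℝ}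
    {N : Matrix ι ν ℝ} {α μ γ : ℝ} (hP : P.IsSymm)
    (hgain : (fromBlocks Γ (P * N) (Nᵀ * P) (γ • (1 : Matrix ν ν ℝ))).PosSemidef)
    (hdecay : (-(P * (α • (1 : Matrix ι ι ℝ) - μ • Λ) + Γ)).PosSemidef)
    (x : ι → ℝ) (w : ν → ℝ) :
    α * (x ⬝ᵥ P *ᵥ x) - μ * (x ⬝ᵥ (P * Λ) *ᵥ x) + 2 * (x ⬝ᵥ P *ᵥ N *ᵥ w) ≤ γ * (w ⬝ᵥ w) := by
  have h₁ := hgain.dotProduct_mulVec_nonneg (Sum.elim x (-w))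
  have h₂ := hdecay.dotProduct_mulVec_nonneg x
  have hcomm := dotProduct_mulVec_comm_of_isSymm hP x (N *ᵥ w)
  simp only [star_trivial, fromBlocks_mulVec, Sum.elim_comp_inl, Sum.elim_comp_inr,
    sumElim_dotProduct_sumElim, mulVec_neg, dotProduct_add, dotProduct_neg, neg_dotProduct,
    ← mulVec_mulVec, smul_mulVec, one_mulVec, dotProduct_smul, smul_eq_mul,
    dotProduct_transpose_mulVec_eq_mulVec_dotProduct] at h₁
  simp only [star_trivial, neg_mulVec, add_mulVec, ← mulVec_mulVec, sub_mulVec, smul_mulVec,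
    one_mulVec, mulVec_sub, mulVec_smul, dotProduct_neg, dotProduct_add, dotProduct_sub,
    dotProduct_smul, smul_eq_mul] at h₂ ⊢
  linarith

end LinearAlgebra

section DeadZone

variable {m : ℕ} {ubar : Fin m → ℝ}

theorem deadzone_mul_deadzone_add_nonpos (hubar : ∀ i, 0 ≤ ubar i) (u : Fin m → ℝ) (i : Fin m) :
    deadzone ubar u i * (deadzone ubar u i + u i) ≤ 0 := by
  have hu : u i = |u i| * Real.sign (u i) := by
    rcases lt_trichotomy (u i) 0 with h | h | h
    · simp [abs_of_neg h, Real.sign_of_neg h]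
    · simp [h]
    · simp [abs_of_pos h, Real.sign_of_pos h]
  calc deadzone ubar u i * (deadzone ubar u i + u i)
      = (min |u i| (ubar i) * Real.sign (u i) - u i) * (min |u i| (ubar i) * Real.sign (u i)) := by
        simp only [deadzone, saturate, Pi.sub_apply, sub_add_cancel]
    _ = (min |u i| (ubar i) - |u i|) * min |u i| (ubar i) * Real.sign (u i) ^ 2 := by
        linear_combination (-min |u i| (ubar i) * Real.sign (u i)) * hu
    _ ≤ 0 := mul_nonpos_of_nonpos_of_nonneg
        (mul_nonpos_of_nonpos_of_nonneg (sub_nonpos.2 (min_le_left _ _))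
          (le_min (abs_nonneg _) (hubar i))) (sq_nonneg _)

theorem deadzone_dotProduct_mulVec_nonpos (hubar : ∀ i, 0 ≤ ubar i) {T : Matrix (Fin m) (Fin m) ℝ}
    (hT : T.IsDiag) (hTnonneg : ∀ i, 0 ≤ T i i) (u : Fin m → ℝ) :
    deadzone ubar u ⬝ᵥ T *ᵥ (deadzone ubar u + u) ≤ 0 := by
  rw [← hT.diagonal_diag]
  refine Finset.sum_nonpos fun i _ => ?_
  rw [mulVec_diagonal, mul_left_comm]
  exact mul_nonpos_of_nonneg_of_nonpos (hTnonneg i) (deadzone_mul_deadzone_add_nonpos hubar u i)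

end DeadZone

theorem enorm'_sq {q : ℕ} (x : Fin q → ℝ) : enorm' x ^ 2 = x ⬝ᵥ x := by
  rw [enorm', Real.sq_sqrt (Finset.sum_nonneg fun i _ => sq_nonneg (x i))]
  exact Finset.sum_congr rfl fun i _ => sq (x i)

section Calculus

variable {E ι κ Y : Type*} [Fintype ι] [Fintype κ]

theorem continuousOn_dotProduct_mulVec [TopologicalSpace Y] {S : Set Y} {x : Y → ι → ℝ}
    {y : Y → κ → ℝ} (A : Matrix ι κ ℝ) (hx : ContinuousOn x S) (hy : ContinuousOn y S) :
    ContinuousOn (fun s => x s ⬝ᵥ A *ᵥ y s) S := by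
  have h : Continuous fun v : (ι → ℝ) × (κ → ℝ) => v.1 ⬝ᵥ A *ᵥ v.2 :=
    continuous_fst.dotProduct (continuous_const.matrix_mulVec continuous_snd)
  exact h.comp_continuousOn (hx.prodMk hy)

theorem continuousOn_mul_add_two_mul_dotProduct_mulVec [TopologicalSpace Y] {S : Set Y}
    {w : Y → ℝ} {x x' : Y → ι → ℝ} (A : Matrix ι ι ℝ) (c : ℝ) (hw : ContinuousOn w S)
    (hx : ContinuousOn x S) (hx' : ContinuousOn x' S) :
    ContinuousOn (fun s => w s * (c * (x s ⬝ᵥ A *ᵥ x s) + 2 * (x s ⬝ᵥ A *ᵥ x' s))) S :=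
  hw.mul (((continuousOn_dotProduct_mulVec A hx hx).const_mul c).add
    ((continuousOn_dotProduct_mulVec A hx hx').const_mul 2))

theorem continuousOn_dotProduct_self [TopologicalSpace Y] {S : Set Y} {x : Y → ι → ℝ}
    (hx : ContinuousOn x S) : ContinuousOn (fun s => x s ⬝ᵥ x s) S :=
  (continuous_id.dotProduct continuous_id).comp_continuousOn hx

theorem hasDerivAt_exp_mul_dotProduct_mulVec {A : Matrix ι ι ℝ} (hA : A.IsSymm) (c : ℝ)
    {x : ℝ → ι → ℝ} {x' : ι → ℝ} {s : ℝ} (hx : HasDerivAt x x' s) :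
    HasDerivAt (fun s => Real.exp (c * s) * (x s ⬝ᵥ A *ᵥ x s))
      (Real.exp (c * s) * (c * (x s ⬝ᵥ A *ᵥ x s) + 2 * (x s ⬝ᵥ A *ᵥ x'))) s := by
  have hexp : HasDerivAt (fun s => Real.exp (c * s)) (Real.exp (c * s) * c) s := by
    simpa using ((hasDerivAt_id s).const_mul c).exp
  have hAx : HasDerivAt (fun s => A *ᵥ x s) (A *ᵥ x') s :=
    A.mulVecLin.toContinuousLinearMap.hasFDerivAt.comp_hasDerivAt s hx
  have hquad : HasDerivAt (fun s => x s ⬝ᵥ A *ᵥ x s) (x' ⬝ᵥ A *ᵥ x s + x s ⬝ᵥ A *ᵥ x') s := by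
    simp only [dotProduct, ← Finset.sum_add_distrib]
    exact .fun_sum fun i _ => (hasDerivAt_pi.1 hx i).mul (hasDerivAt_pi.1 hAx i)
  refine (hexp.mul hquad).congr_deriv ?_
  rw [dotProduct_mulVec_comm_of_isSymm hA x' (x s)]
  ring

variable [NormedAddCommGroup E] {a b c d : ℝ}

theorem integrableOn_uIoc_prod {F : ℝ → ℝ → E} (hab : a ≤ b) (hcd : c ≤ d)
    (hF : ContinuousOn (fun p : ℝ × ℝ => F p.1 p.2) (Icc a b ×ˢ Icc c d)) :
    MeasureTheory.IntegrableOn F.uncurry (uIoc a b ×ˢ uIoc c d) := by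
  refine (hF.integrableOn_compact (isCompact_Icc.prod isCompact_Icc)).mono_set ?_
  rw [uIoc_of_le hab, uIoc_of_le hcd]
  exact prod_mono Ioc_subset_Icc_self Ioc_subset_Icc_self

variable [NormedSpace ℝ E]

theorem intervalIntegrable_intervalIntegral {F : ℝ → ℝ → E} (hab : a ≤ b) (hcd : c ≤ d)
    (hF : ContinuousOn (fun p : ℝ × ℝ => F p.1 p.2) (Icc a b ×ˢ Icc c d)) :
    IntervalIntegrable (fun s => ∫ z in c..d, F s z) MeasureTheory.volume a b := by
  have h := integrableOn_uIoc_prod hab hcd hF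
  rw [MeasureTheory.IntegrableOn, MeasureTheory.Measure.volume_eq_prod,
    ← MeasureTheory.Measure.prod_restrict, uIoc_of_le hcd] at h
  simp only [intervalIntegrable_iff, intervalIntegral.integral_of_le hcd]
  exact h.integral_prod_left

theorem integral_sub_integral_eq_integral_integral_deriv [CompleteSpace E] {g g' : ℝ → ℝ → E}
    (hab : a ≤ b) (hcd : c ≤ d)
    (hg : ContinuousOn (fun p : ℝ × ℝ => g p.1 p.2) (Icc a b ×ˢ Icc c d))
    (hg' : ContinuousOn (fun p : ℝ × ℝ => g' p.1 p.2) (Icc a b ×ˢ Icc c d))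
    (hderiv : ∀ s ∈ Ioo a b, ∀ z ∈ Icc c d, HasDerivAt (fun s => g s z) (g' s z) s) :
    (∫ z in c..d, g b z) - ∫ z in c..d, g a z = ∫ s in a..b, ∫ z in c..d, g' s z := by
  have hint (s : ℝ) (hs : s ∈ Icc a b) : IntervalIntegrable (g s) MeasureTheory.volume c d :=
    (hg.uncurry_left s hs).intervalIntegrable_of_Icc hcd
  rw [MeasureTheory.intervalIntegral_intervalIntegral_swap (integrableOn_uIoc_prod hab hcd hg'),
    ← intervalIntegral.integral_sub (hint b (right_mem_Icc.2 hab)) (hint a (left_mem_Icc.2 hab))]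
  refine intervalIntegral.integral_congr fun z hz => ?_
  rw [uIcc_of_le hcd] at hz
  exact (intervalIntegral.integral_eq_sub_of_hasDerivAt_of_le hab (hg.uncurry_right z hz)
    (fun s hs => hderiv s hs z hz) ((hg'.uncurry_right z hz).intervalIntegrable_of_Icc hab)).symm

end Calculus

section Lyapunov

variable {ι ν : Type*} [Fintype ι]

/-- The Lyapunov functional `V(x) = ∫₀¹ e^{-μz} x(z)ᵀ P x(z) dz` of a spatial profile `x`. -/
noncomputable def weightedEnergy (P : Matrix ι ι ℝ) (μ : ℝ) (x : ℝ → ι → ℝ) : ℝ :=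
  ∫ z in (0 : ℝ)..1, Real.exp (-μ * z) * (x z ⬝ᵥ P *ᵥ x z)

theorem continuous_exp_mul (c : ℝ) : Continuous fun z => Real.exp (c * z) := by fun_prop

theorem continuousOn_weightedEnergy_integrand (P : Matrix ι ι ℝ) (μ : ℝ) {x : ℝ → ι → ℝ}
    (hx : ContinuousOn x (Icc 0 1)) :
    ContinuousOn (fun z => Real.exp (-μ * z) * (x z ⬝ᵥ P *ᵥ x z)) (Icc 0 1) :=
  (continuous_exp_mul (-μ)).continuousOn.mul (continuousOn_dotProduct_mulVec P hx hx)

theorem mul_exp_neg_mul_integral_le_weightedEnergy {P : Matrix ι ι ℝ} {μ m : ℝ} (hμ : 0 ≤ μ)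
    (hm : 0 ≤ m) (hP : ∀ x, m * (x ⬝ᵥ x) ≤ x ⬝ᵥ P *ᵥ x) {x : ℝ → ι → ℝ}
    (hx : ContinuousOn x (Icc 0 1)) :
    m * Real.exp (-μ) * ∫ z in (0 : ℝ)..1, x z ⬝ᵥ x z ≤ weightedEnergy P μ x := by
  rw [← intervalIntegral.integral_const_mul]
  refine intervalIntegral.integral_mono_on zero_le_one
    ((continuousOn_dotProduct_self hx).const_mul _ |>.intervalIntegrable_of_Icc zero_le_one)
    ((continuousOn_weightedEnergy_integrand P μ hx).intervalIntegrable_of_Icc zero_le_one)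
    fun z hz => ?_
  have hexp : Real.exp (-μ) ≤ Real.exp (-μ * z) :=
    Real.exp_le_exp.2 (by nlinarith [hz.2])
  calc m * Real.exp (-μ) * (x z ⬝ᵥ x z) = Real.exp (-μ) * (m * (x z ⬝ᵥ x z)) := by ring
    _ ≤ Real.exp (-μ * z) * (x z ⬝ᵥ P *ᵥ x z) :=
      mul_le_mul hexp (hP _) (mul_nonneg hm (dotProduct_self_nonneg _)) (Real.exp_pos _).le

theorem weightedEnergy_le_mul_integral {P : Matrix ι ι ℝ} {μ M : ℝ} (hμ : 0 ≤ μ)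
    (hM : 0 ≤ M) (hP : ∀ x, x ⬝ᵥ P *ᵥ x ≤ M * (x ⬝ᵥ x)) {x : ℝ → ι → ℝ}
    (hx : ContinuousOn x (Icc 0 1)) :
    weightedEnergy P μ x ≤ M * ∫ z in (0 : ℝ)..1, x z ⬝ᵥ x z := by
  rw [← intervalIntegral.integral_const_mul]
  refine intervalIntegral.integral_mono_on zero_le_one
    ((continuousOn_weightedEnergy_integrand P μ hx).intervalIntegrable_of_Icc zero_le_one)
    ((continuousOn_dotProduct_self hx).const_mul _ |>.intervalIntegrable_of_Icc zero_le_one)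
    fun z hz => ?_
  have hexp : Real.exp (-μ * z) ≤ 1 := Real.exp_le_one_iff.2 (by nlinarith [hz.1])
  calc Real.exp (-μ * z) * (x z ⬝ᵥ P *ᵥ x z) ≤ Real.exp (-μ * z) * (M * (x z ⬝ᵥ x z)) :=
      mul_le_mul_of_nonneg_left (hP _) (Real.exp_pos _).le
    _ ≤ M * (x z ⬝ᵥ x z) :=
      mul_le_of_le_one_left (mul_nonneg hM (dotProduct_self_nonneg _)) hexp

theorem integral_exp_mul_flux_nonneg {Q : Matrix ι ι ℝ} (hQ : Q.IsSymm) {μ : ℝ}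
    {x x' : ℝ → ι → ℝ} (hx : ContinuousOn x (Icc 0 1)) (hx' : ContinuousOn x' (Icc 0 1))
    (hderiv : ∀ z ∈ Ioo (0 : ℝ) 1, HasDerivAt x (x' z) z)
    (hboundary : x 0 ⬝ᵥ Q *ᵥ x 0 ≤ Real.exp (-μ) * (x 1 ⬝ᵥ Q *ᵥ x 1)) :
    0 ≤ ∫ z in (0 : ℝ)..1,
      Real.exp (-μ * z) * (-μ * (x z ⬝ᵥ Q *ᵥ x z) + 2 * (x z ⬝ᵥ Q *ᵥ x' z)) := by
  rw [intervalIntegral.integral_eq_sub_of_hasDerivAt_of_le zero_le_one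
    (continuousOn_weightedEnergy_integrand Q μ hx)
    (fun z hz => hasDerivAt_exp_mul_dotProduct_mulVec hQ (-μ) (hderiv z hz))
    ((continuousOn_mul_add_two_mul_dotProduct_mulVec Q (-μ) (continuous_exp_mul (-μ)).continuousOn
      hx hx').intervalIntegrable_of_Icc zero_le_one)]
  simpa using hboundary

variable [Fintype ν]

/-- `X` is a classical (`C¹`) solution of `∂ₜX + Λ ∂_zX = N d` on `[0, T₀] × [0, 1]` with continuous
disturbance `d`. The partial derivatives are carried as explicit functions `Xt` and `Xz`, and are
one-sided on the boundary of the rectangle; boundary conditions are not included. -/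
structure IsClassicalSolution (Λ : Matrix ι ι ℝ) (N : Matrix ι ν ℝ) (T₀ : ℝ)
    (X Xt Xz : ℝ → ℝ → ι → ℝ) (d : ℝ → ℝ → ν → ℝ) : Prop where
  continuousOn : ContinuousOn (fun p : ℝ × ℝ => X p.1 p.2) (Icc 0 T₀ ×ˢ Icc (0 : ℝ) 1)
  continuousOn_time_deriv :
    ContinuousOn (fun p : ℝ × ℝ => Xt p.1 p.2) (Icc 0 T₀ ×ˢ Icc (0 : ℝ) 1)
  continuousOn_space_deriv :
    ContinuousOn (fun p : ℝ × ℝ => Xz p.1 p.2) (Icc 0 T₀ ×ˢ Icc (0 : ℝ) 1)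
  hasDerivWithinAt_time : ∀ t ∈ Icc (0 : ℝ) T₀, ∀ z ∈ Icc (0 : ℝ) 1,
    HasDerivWithinAt (fun s => X s z) (Xt t z) (Icc (0 : ℝ) T₀) t
  hasDerivWithinAt_space : ∀ t ∈ Icc (0 : ℝ) T₀, ∀ z ∈ Icc (0 : ℝ) 1,
    HasDerivWithinAt (X t) (Xz t z) (Icc (0 : ℝ) 1) z
  continuousOn_disturbance :
    ContinuousOn (fun p : ℝ × ℝ => d p.1 p.2) (Icc 0 T₀ ×ˢ Icc (0 : ℝ) 1)
  equation : ∀ t ∈ Icc (0 : ℝ) T₀, ∀ z ∈ Icc (0 : ℝ) 1, Xt t z + Λ *ᵥ Xz t z = N *ᵥ d t z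

namespace IsClassicalSolution

variable {P Λ : Matrix ι ι ℝ} {N : Matrix ι ν ℝ} {T₀ t α μ γ : ℝ}
  {X Xt Xz : ℝ → ℝ → ι → ℝ} {d : ℝ → ℝ → ν → ℝ}

theorem mono (h : IsClassicalSolution Λ N T₀ X Xt Xz d) (ht : t ≤ T₀) :
    IsClassicalSolution Λ N t X Xt Xz d := by
  have hsub : Icc 0 t ⊆ Icc 0 T₀ := Icc_subset_Icc_right ht
  have hsub' : Icc 0 t ×ˢ Icc (0 : ℝ) 1 ⊆ Icc 0 T₀ ×ˢ Icc 0 1 := prod_mono_left hsub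
  exact ⟨h.continuousOn.mono hsub', h.continuousOn_time_deriv.mono hsub',
    h.continuousOn_space_deriv.mono hsub',
    fun s hs z hz => (h.hasDerivWithinAt_time s (hsub hs) z hz).mono hsub,
    fun s hs => h.hasDerivWithinAt_space s (hsub hs), h.continuousOn_disturbance.mono hsub',
    fun s hs => h.equation s (hsub hs)⟩

theorem exp_mul_dissipation_le (h : IsClassicalSolution Λ N T₀ X Xt Xz d)
    (hμ : 0 ≤ μ) (hγ : 0 ≤ γ)
    (hsupply : ∀ x w, α * (x ⬝ᵥ P *ᵥ x) - μ * (x ⬝ᵥ (P * Λ) *ᵥ x) + 2 * (x ⬝ᵥ P *ᵥ N *ᵥ w) ≤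
      γ * (w ⬝ᵥ w)) (ht : t ∈ Icc 0 T₀) {z : ℝ} (hz : z ∈ Icc (0 : ℝ) 1) :
    Real.exp (-μ * z) * (α * (X t z ⬝ᵥ P *ᵥ X t z) + 2 * (X t z ⬝ᵥ P *ᵥ Xt t z)) ≤
      γ * (d t z ⬝ᵥ d t z) - Real.exp (-μ * z) *
        (-μ * (X t z ⬝ᵥ (P * Λ) *ᵥ X t z) + 2 * (X t z ⬝ᵥ (P * Λ) *ᵥ Xz t z)) := by
  have hXt : Xt t z = N *ᵥ d t z - Λ *ᵥ Xz t z := eq_sub_of_add_eq (h.equation t ht z hz)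
  have hPXt : X t z ⬝ᵥ P *ᵥ Xt t z =
      X t z ⬝ᵥ P *ᵥ N *ᵥ d t z - X t z ⬝ᵥ (P * Λ) *ᵥ Xz t z := by
    rw [hXt, mulVec_sub, dotProduct_sub, mulVec_mulVec (Xz t z)]
  have hexp : Real.exp (-μ * z) ≤ 1 := Real.exp_le_one_iff.2 (by nlinarith [hz.1])
  have hweighted := (mul_le_mul_of_nonneg_left (hsupply (X t z) (d t z))
    (Real.exp_pos (-μ * z)).le).trans
      (mul_le_of_le_one_left (mul_nonneg hγ (dotProduct_self_nonneg _)) hexp)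
  rw [hPXt]
  linarith

theorem integral_dissipation_le (h : IsClassicalSolution Λ N T₀ X Xt Xz d)
    (hQ : (P * Λ).IsSymm) (hμ : 0 ≤ μ) (hγ : 0 ≤ γ)
    (hsupply : ∀ x w, α * (x ⬝ᵥ P *ᵥ x) - μ * (x ⬝ᵥ (P * Λ) *ᵥ x) + 2 * (x ⬝ᵥ P *ᵥ N *ᵥ w) ≤
      γ * (w ⬝ᵥ w)) (ht : t ∈ Icc 0 T₀)
    (hboundary : X t 0 ⬝ᵥ (P * Λ) *ᵥ X t 0 ≤ Real.exp (-μ) * (X t 1 ⬝ᵥ (P * Λ) *ᵥ X t 1)) :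
    ∫ z in (0 : ℝ)..1,
        Real.exp (-μ * z) * (α * (X t z ⬝ᵥ P *ᵥ X t z) + 2 * (X t z ⬝ᵥ P *ᵥ Xt t z)) ≤
      γ * ∫ z in (0 : ℝ)..1, d t z ⬝ᵥ d t z := by
  have hX := h.continuousOn.uncurry_left t ht
  have hXt := h.continuousOn_time_deriv.uncurry_left t ht
  have hXz := h.continuousOn_space_deriv.uncurry_left t ht
  have hd := h.continuousOn_disturbance.uncurry_left t ht
  have hexp := (continuous_exp_mul (-μ)).continuousOn (s := Icc 0 1)
  have hdissipation := (continuousOn_mul_add_two_mul_dotProduct_mulVec P α hexp hX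
    hXt).intervalIntegrable_of_Icc (μ := MeasureTheory.volume) zero_le_one
  have hflux := (continuousOn_mul_add_two_mul_dotProduct_mulVec (P * Λ) (-μ) hexp hX
    hXz).intervalIntegrable_of_Icc (μ := MeasureTheory.volume) zero_le_one
  have hsupp := ((continuousOn_dotProduct_self hd).const_mul γ).intervalIntegrable_of_Icc
    (μ := MeasureTheory.volume) zero_le_one
  have hle := intervalIntegral.integral_mono_on zero_le_one hdissipation (hsupp.sub hflux)
    fun z hz => h.exp_mul_dissipation_le hμ hγ hsupply ht hz
  have hnonneg := integral_exp_mul_flux_nonneg hQ hX hXz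
    (fun z hz => (h.hasDerivWithinAt_space t ht z (Ioo_subset_Icc_self hz)).hasDerivAt
      (Icc_mem_nhds hz.1 hz.2)) hboundary
  rw [intervalIntegral.integral_sub hsupp hflux, intervalIntegral.integral_const_mul] at hle
  linarith

theorem exp_mul_weightedEnergy_sub_eq (h : IsClassicalSolution Λ N t X Xt Xz d) (ht : 0 ≤ t)
    (hP : P.IsSymm) (α μ : ℝ) :
    Real.exp (α * t) * weightedEnergy P μ (X t) - weightedEnergy P μ (X 0) =
      ∫ s in (0 : ℝ)..t, Real.exp (α * s) * ∫ z in (0 : ℝ)..1,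
        Real.exp (-μ * z) * (α * (X s z ⬝ᵥ P *ᵥ X s z) + 2 * (X s z ⬝ᵥ P *ᵥ Xt s z)) := by
  have hspace : Continuous fun p : ℝ × ℝ => Real.exp (-μ * p.2) := by fun_prop
  have htime : Continuous fun p : ℝ × ℝ => Real.exp (α * p.1) := by fun_prop
  have hfubini := integral_sub_integral_eq_integral_integral_deriv ht zero_le_one
    (g := fun s z => Real.exp (-μ * z) * (Real.exp (α * s) * (X s z ⬝ᵥ P *ᵥ X s z)))
    (g' := fun s z => Real.exp (-μ * z) * (Real.exp (α * s) *
      (α * (X s z ⬝ᵥ P *ᵥ X s z) + 2 * (X s z ⬝ᵥ P *ᵥ Xt s z))))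
    (hspace.continuousOn.mul (htime.continuousOn.mul
      (continuousOn_dotProduct_mulVec P h.continuousOn h.continuousOn)))
    (hspace.continuousOn.mul (continuousOn_mul_add_two_mul_dotProduct_mulVec P α htime.continuousOn
      h.continuousOn h.continuousOn_time_deriv))
    fun s hs z hz => (hasDerivAt_exp_mul_dotProduct_mulVec hP α
      ((h.hasDerivWithinAt_time s (Ioo_subset_Icc_self hs) z hz).hasDerivAt
        (Icc_mem_nhds hs.1 hs.2))).const_mul _
  simpa only [weightedEnergy, mul_left_comm (Real.exp (-μ * _)),
    intervalIntegral.integral_const_mul, mul_zero, Real.exp_zero, one_mul] using hfubini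

theorem exp_mul_weightedEnergy_le (h : IsClassicalSolution Λ N t X Xt Xz d) (ht : 0 ≤ t)
    (hP : P.IsSymm) (hQ : (P * Λ).IsSymm) (hα : 0 ≤ α) (hμ : 0 ≤ μ) (hγ : 0 ≤ γ)
    (hsupply : ∀ x w, α * (x ⬝ᵥ P *ᵥ x) - μ * (x ⬝ᵥ (P * Λ) *ᵥ x) + 2 * (x ⬝ᵥ P *ᵥ N *ᵥ w) ≤
      γ * (w ⬝ᵥ w))
    (hboundary : ∀ s ∈ Icc 0 t,
      X s 0 ⬝ᵥ (P * Λ) *ᵥ X s 0 ≤ Real.exp (-μ) * (X s 1 ⬝ᵥ (P * Λ) *ᵥ X s 1)) :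
    Real.exp (α * t) * weightedEnergy P μ (X t) ≤ weightedEnergy P μ (X 0) +
      Real.exp (α * t) * (γ * ∫ s in (0 : ℝ)..t, ∫ z in (0 : ℝ)..1, d s z ⬝ᵥ d s z) := by
  have hspace : Continuous fun p : ℝ × ℝ => Real.exp (-μ * p.2) := by fun_prop
  have hdissipation := (intervalIntegrable_intervalIntegral ht zero_le_one
    (F := fun s z => Real.exp (-μ * z) *
      (α * (X s z ⬝ᵥ P *ᵥ X s z) + 2 * (X s z ⬝ᵥ P *ᵥ Xt s z)))
    (continuousOn_mul_add_two_mul_dotProduct_mulVec P α hspace.continuousOn h.continuousOn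
      h.continuousOn_time_deriv)).continuousOn_mul (continuous_exp_mul α).continuousOn
  have hsupplied := intervalIntegrable_intervalIntegral ht zero_le_one
    (F := fun s z => d s z ⬝ᵥ d s z) (continuousOn_dotProduct_self h.continuousOn_disturbance)
  have hrate (s : ℝ) (hs : s ∈ Icc 0 t) :
      Real.exp (α * s) * ∫ z in (0 : ℝ)..1,
          Real.exp (-μ * z) * (α * (X s z ⬝ᵥ P *ᵥ X s z) + 2 * (X s z ⬝ᵥ P *ᵥ Xt s z)) ≤
        Real.exp (α * t) * γ * ∫ z in (0 : ℝ)..1, d s z ⬝ᵥ d s z := by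
    have hd : 0 ≤ ∫ z in (0 : ℝ)..1, d s z ⬝ᵥ d s z :=
      intervalIntegral.integral_nonneg zero_le_one fun z _ => dotProduct_self_nonneg _
    have hexp : Real.exp (α * s) ≤ Real.exp (α * t) :=
      Real.exp_le_exp.2 (mul_le_mul_of_nonneg_left hs.2 hα)
    have hdiss := h.integral_dissipation_le hQ hμ hγ hsupply hs (hboundary s hs)
    rw [mul_assoc]
    exact (mul_le_mul_of_nonneg_left hdiss (Real.exp_pos _).le).trans
      (mul_le_mul_of_nonneg_right hexp (mul_nonneg hγ hd))
  have hle := intervalIntegral.integral_mono_on ht hdissipation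
    (hsupplied.const_mul (Real.exp (α * t) * γ)) hrate
  rw [← h.exp_mul_weightedEnergy_sub_eq ht hP α μ, intervalIntegral.integral_const_mul] at hle
  linarith

end IsClassicalSolution

end Lyapunov

theorem sqrt_add_le_sqrt_add_sqrt {a b : ℝ} (ha : 0 ≤ a) (hb : 0 ≤ b) : √(a + b) ≤ √a + √b := by
  refine Real.sqrt_le_iff.2 ⟨by positivity, ?_⟩
  calc a + b = √a ^ 2 + √b ^ 2 := by rw [Real.sq_sqrt ha, Real.sq_sqrt hb]
    _ ≤ (√a + √b) ^ 2 := pow_add_pow_le (Real.sqrt_nonneg a) (Real.sqrt_nonneg b) two_ne_zero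

theorem sqrt_le_of_exp_mul_le {m M χ α μ t E E₀ D : ℝ} (hm : 0 < m) (hM : 0 ≤ M) (hχ : 0 ≤ χ)
    (hE₀ : 0 ≤ E₀) (hD : 0 ≤ D)
    (h : Real.exp (α * t) * (m * Real.exp (-μ) * E) ≤
      M * E₀ + Real.exp (α * t) * (χ ^ 2 * D)) :
    √E ≤ √(M / m) * Real.exp (μ / 2) * Real.exp (-(α / 2) * t) * √E₀ +
      χ * Real.exp (μ / 2) / √m * √D := by
  have hE : E ≤ M / m * Real.exp μ * Real.exp (-(α * t)) * E₀ + χ ^ 2 * Real.exp μ / m * D := by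
    refine le_of_mul_le_mul_left ?_
      (by positivity : 0 < Real.exp (α * t) * (m * Real.exp (-μ)))
    calc Real.exp (α * t) * (m * Real.exp (-μ)) * E
        ≤ M * E₀ + Real.exp (α * t) * (χ ^ 2 * D) := by rwa [mul_assoc]
      _ = Real.exp (α * t) * (m * Real.exp (-μ)) *
          (M / m * Real.exp μ * Real.exp (-(α * t)) * E₀ + χ ^ 2 * Real.exp μ / m * D) := by
        rw [Real.exp_neg, Real.exp_neg]
        field_simp
  have hdecay : -(α / 2) * t = -(α * t) / 2 := by ring
  calc √E ≤ √(M / m * Real.exp μ * Real.exp (-(α * t)) * E₀ + χ ^ 2 * Real.exp μ / m * D) :=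
        Real.sqrt_le_sqrt hE
    _ ≤ √(M / m * Real.exp μ * Real.exp (-(α * t)) * E₀) + √(χ ^ 2 * Real.exp μ / m * D) :=
        sqrt_add_le_sqrt_add_sqrt (by positivity) (by positivity)
    _ = _ := by
        rw [hdecay, Real.exp_half, Real.exp_half, Real.sqrt_mul (by positivity),
          Real.sqrt_mul (by positivity), Real.sqrt_mul (by positivity),
          Real.sqrt_mul (by positivity) D, Real.sqrt_div hM, Real.sqrt_div (by positivity),
          Real.sqrt_mul (by positivity), Real.sqrt_sq hχ]

theorem classical_ISS_general {ι κ ν : Type*} [Fintype ι] [Fintype κ] [Fintype ν]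
    [DecidableEq ι] [DecidableEq ν] {P Λ A Γ : Matrix ι ι ℝ} {B : Matrix ι κ ℝ}
    {K : Matrix κ ι ℝ} {T : Matrix κ κ ℝ} {N : Matrix ι ν ℝ} {ψ : (κ → ℝ) → κ → ℝ} {μ χ α : ℝ}
    (hP : P.PosDef) (hPΛ : (P * Λ).IsSymm) (hT : T.IsSymm)
    (hψ : ∀ u, ψ u ⬝ᵥ T *ᵥ (ψ u + u) ≤ 0) (hμ : 0 ≤ μ) (hχ : 0 ≤ χ) (hα : 0 ≤ α)
    (hC1 : (-(fromBlocks (Aᵀ * (P * Λ) * A - Real.exp (-μ) • (P * Λ))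
      (Aᵀ * (P * Λ) * B - Kᵀ * T) (Bᵀ * (P * Λ) * A - T * K)
      (Bᵀ * (P * Λ) * B - 2 • T))).PosSemidef)
    (hC2 : (fromBlocks Γ (P * N) (Nᵀ * P) (χ ^ 2 • (1 : Matrix ν ν ℝ))).PosSemidef)
    (hC3 : (-(P * (α • (1 : Matrix ι ι ℝ) - μ • Λ) + Γ)).PosSemidef)
    {T₀ : ℝ} {X Xt Xz : ℝ → ℝ → ι → ℝ} {d : ℝ → ℝ → ν → ℝ}
    (hX : IsClassicalSolution Λ N T₀ X Xt Xz d)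
    (hbc : ∀ t ∈ Icc 0 T₀, X t 0 = A *ᵥ X t 1 + B *ᵥ ψ (K *ᵥ X t 1))
    {t : ℝ} (ht : t ∈ Icc 0 T₀) :
    √(∫ z in (0 : ℝ)..1, X t z ⬝ᵥ X t z) ≤
      √(sSup (spectrum ℝ P) / sInf (spectrum ℝ P)) * Real.exp (μ / 2) *
          Real.exp (-(α / 2) * t) * √(∫ z in (0 : ℝ)..1, X 0 z ⬝ᵥ X 0 z) +
        χ * Real.exp (μ / 2) / √(sInf (spectrum ℝ P)) *
          √(∫ θ in (0 : ℝ)..t, ∫ z in (0 : ℝ)..1, d θ z ⬝ᵥ d θ z) := by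
  rcases isEmpty_or_nonempty ι with _ | _
  · simp
  have hboundary (s : ℝ) (hs : s ∈ Icc 0 t) :
      X s 0 ⬝ᵥ (P * Λ) *ᵥ X s 0 ≤ Real.exp (-μ) * (X s 1 ⬝ᵥ (P * Λ) *ᵥ X s 1) := by
    rw [hbc s (Icc_subset_Icc_right ht.2 hs)]
    exact dotProduct_mulVec_le_of_boundary_lmi hT hC1 (hψ _)
  have hPsymm : P.IsSymm := isHermitian_iff_isSymm.1 hP.isHermitian
  have hm := sInf_spectrum_pos hP
  have hM : 0 ≤ sSup (spectrum ℝ P) := hm.le.trans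
    (Real.sInf_le_sSup _ finite_real_spectrum.bddBelow finite_real_spectrum.bddAbove)
  have hlower := mul_exp_neg_mul_integral_le_weightedEnergy hμ hm.le
    (sInf_spectrum_mul_le_dotProduct_mulVec hP.isHermitian) (hX.continuousOn.uncurry_left t ht)
  have hupper := weightedEnergy_le_mul_integral hμ hM
    (dotProduct_mulVec_le_sSup_spectrum_mul hP.isHermitian)
    (hX.continuousOn.uncurry_left 0 (left_mem_Icc.2 (ht.1.trans ht.2)))
  have hdecay := (hX.mono ht.2).exp_mul_weightedEnergy_le ht.1 hPsymm hPΛ hα hμ (sq_nonneg χ)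
    (supply_rate_le_of_domain_lmi hPsymm hC2 hC3) hboundary
  refine sqrt_le_of_exp_mul_le hm hM hχ
    (intervalIntegral.integral_nonneg zero_le_one fun z _ => dotProduct_self_nonneg _)
    (intervalIntegral.integral_nonneg ht.1 fun θ _ =>
      intervalIntegral.integral_nonneg zero_le_one fun z _ => dotProduct_self_nonneg _) ?_
  exact (mul_le_mul_of_nonneg_left hlower (Real.exp_pos _).le).trans
    (hdecay.trans (add_le_add_left hupper _))

/-- under the matrix inequalities (C1), (C2), (C3), every classical solution of
`∂ₜX + Λ∂_zX = Nd` with the saturated boundary condition satisfies the ISS bound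
`‖X(t)‖_{L²} ≤ √(λ_max(P)/λ_min(P)) e^{μ/2} e^{-(α/2)t} ‖X(0)‖_{L²}
  + (χ e^{μ/2}/√λ_min(P)) (∫₀ᵗ ‖d(θ)‖²_{L²} dθ)^{1/2}`.
Here `P` is diagonal, so `λ_min(P) = ⨅ i, P i i` and `λ_max(P) = ⨆ i, P i i`. -/
theorem classical_ISS {n m q : ℕ}
    (Λ : Matrix (Fin n) (Fin n) ℝ) (hΛdiag : Λ.IsDiag) (hΛpos : ∀ i, 0 < Λ i i)
    (H : Matrix (Fin n) (Fin n) ℝ) (B : Matrix (Fin n) (Fin m) ℝ)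
    (N : Matrix (Fin n) (Fin q) ℝ) (K : Matrix (Fin m) (Fin n) ℝ)
    (ubar : Fin m → ℝ) (hubar : ∀ i, 0 < ubar i)
    (P : Matrix (Fin n) (Fin n) ℝ) (hPdiag : P.IsDiag) (hPpos : ∀ i, 0 < P i i)
    (T : Matrix (Fin m) (Fin m) ℝ) (hTdiag : T.IsDiag) (hTpos : ∀ i, 0 < T i i)
    (μ χ α : ℝ) (hμ : 0 < μ) (hχ : 0 < χ) (hα : 0 < α)
    (Γ : Matrix (Fin n) (Fin n) ℝ) (hΓsymm : Γ.IsSymm) (hΓpos : Γ.PosDef)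
    (hC1 : (-(Matrix.fromBlocks
        ((H + B * K)ᵀ * P * Λ * (H + B * K) - Real.exp (-μ) • (P * Λ))
        ((H + B * K)ᵀ * P * Λ * B - Kᵀ * T)
        (Bᵀ * P * Λ * (H + B * K) - T * K)
        (Bᵀ * P * Λ * B - 2 • T))).PosSemidef)
    (hC2 : (Matrix.fromBlocks Γ (P * N) (Nᵀ * P)
        (χ ^ 2 • (1 : Matrix (Fin q) (Fin q) ℝ))).PosSemidef)
    (hC3 : (-(P * (α • (1 : Matrix (Fin n) (Fin n) ℝ) - μ • Λ) + Γ)).PosSemidef)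
    (T₀ : ℝ) (hT₀ : 0 < T₀)
    (X Xt Xz : ℝ → ℝ → Fin n → ℝ) (d : ℝ → ℝ → Fin q → ℝ)
    (hXcont : ContinuousOn (fun p : ℝ × ℝ => X p.1 p.2) (Icc 0 T₀ ×ˢ Icc (0:ℝ) 1))
    (hXtcont : ContinuousOn (fun p : ℝ × ℝ => Xt p.1 p.2) (Icc 0 T₀ ×ˢ Icc (0:ℝ) 1))
    (hXzcont : ContinuousOn (fun p : ℝ × ℝ => Xz p.1 p.2) (Icc 0 T₀ ×ˢ Icc (0:ℝ) 1))
    (hXt : ∀ t ∈ Icc (0:ℝ) T₀, ∀ z ∈ Icc (0:ℝ) 1,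
      HasDerivWithinAt (fun s => X s z) (Xt t z) (Icc (0:ℝ) T₀) t)
    (hXz : ∀ t ∈ Icc (0:ℝ) T₀, ∀ z ∈ Icc (0:ℝ) 1,
      HasDerivWithinAt (fun w => X t w) (Xz t z) (Icc (0:ℝ) 1) z)
    (hdcont : ContinuousOn (fun p : ℝ × ℝ => d p.1 p.2) (Icc 0 T₀ ×ˢ Icc (0:ℝ) 1))
    (hpde : ∀ t ∈ Icc (0:ℝ) T₀, ∀ z ∈ Icc (0:ℝ) 1,
      Xt t z + Λ.mulVec (Xz t z) = N.mulVec (d t z))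
    (hbc : ∀ t ∈ Icc (0:ℝ) T₀,
      X t 0 = (H + B * K).mulVec (X t 1) + B.mulVec (deadzone ubar (K.mulVec (X t 1)))) :
    ∀ t ∈ Icc (0:ℝ) T₀,
      Real.sqrt (∫ z in (0:ℝ)..1, enorm' (X t z) ^ 2) ≤
        Real.sqrt ((⨆ i, P i i) / (⨅ i, P i i)) * Real.exp (μ / 2) *
            Real.exp (-(α / 2) * t) * Real.sqrt (∫ z in (0:ℝ)..1, enorm' (X 0 z) ^ 2) +
          (χ * Real.exp (μ / 2) / Real.sqrt (⨅ i, P i i)) *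
            Real.sqrt (∫ θ in (0:ℝ)..t, ∫ z in (0:ℝ)..1, enorm' (d θ z) ^ 2) := by
  intro t ht
  have hX : IsClassicalSolution Λ N T₀ X Xt Xz d :=
    ⟨hXcont, hXtcont, hXzcont, hXt, hXz, hdcont, hpde⟩
  have hC1' : (-(fromBlocks
      ((H + B * K)ᵀ * (P * Λ) * (H + B * K) - Real.exp (-μ) • (P * Λ))
      ((H + B * K)ᵀ * (P * Λ) * B - Kᵀ * T) (Bᵀ * (P * Λ) * (H + B * K) - T * K)
      (Bᵀ * (P * Λ) * B - 2 • T))).PosSemidef := by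
    simpa only [Matrix.mul_assoc] using hC1
  have h := classical_ISS_general (posDef_of_isDiag hPdiag hPpos)
    (isDiag_mul hPdiag hΛdiag).isSymm hTdiag.isSymm
    (deadzone_dotProduct_mulVec_nonpos (fun i => (hubar i).le) hTdiag fun i => (hTpos i).le)
    hμ.le hχ.le hα.le hC1' hC2 hC3 hX hbc ht
  rw [spectrum_eq_range_diag hPdiag] at h
  simp only [enorm'_sq]
  exact h
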